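/- Let (C, ⊗, I) be a monoidal category and let C, D be objects of C such that C ⊗ D is a semisimple object. If D has a strong right dual (i.e. there exists an object D* and a split monomorphism i_D : I → D ⊗ D*) and the functor − ⊗ D : C → C preserves monomorphisms, then C is a semisimple object of C. -/

import Mathlib

open CategoryTheory MonoidalCategory

/-- An object `X` of a category is *semisimple* if every monomorphism into `X` is a
split monomorphism. -/
def IsSemisimpleObj {C : Type*} [Category C] (X : C) : Prop :=
  ∀ ⦃Z : C⦄ (f : Z ⟶ X), Mono f → IsSplitMono f

section Functor

variable {C D : Type*} [Category C] [Category D]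

theorem isSplitMono_of_isSplitMono_comp {X Y Z : C} (f : X ⟶ Y) (g : Y ⟶ Z)
    [IsSplitMono (f ≫ g)] : IsSplitMono f :=
  .mk' { retraction := g ≫ retraction (f ≫ g), id := by rw [← Category.assoc, IsSplitMono.id] }

variable {F : C ⥤ D} {G : D ⥤ C} (η : 𝟭 C ⟶ F ⋙ G)

theorem isSplitMono_of_isSplitMono_map {X Z : C} (f : Z ⟶ X)
    [IsSplitMono (η.app Z)] [IsSplitMono (F.map f)] : IsSplitMono f :=
  have : IsSplitMono (f ≫ η.app X) := by
    rw [show f ≫ η.app X = η.app Z ≫ G.map (F.map f) from η.naturality f]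
    infer_instance
  isSplitMono_of_isSplitMono_comp f (η.app X)

theorem IsSemisimpleObj.of_obj [F.PreservesMonomorphisms] [∀ Z, IsSplitMono (η.app Z)]
    {X : C} (hX : IsSemisimpleObj (F.obj X)) : IsSemisimpleObj X := fun _ f _ ↦
  have : IsSplitMono (F.map f) := hX (F.map f) inferInstance
  isSplitMono_of_isSplitMono_map η f

end Functor

section Monoidal

variable {C : Type*} [Category C] [MonoidalCategory C] {Y Y' : C}

/-- The natural transformation `X ⟶ (X ⊗ Y) ⊗ Y'` induced by `i : 𝟙_ C ⟶ Y ⊗ Y'`. When `i` is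
the coevaluation of a duality it is the unit of `- ⊗ Y ⊣ - ⊗ Y'`; when `i` is merely split mono
it still shows that `- ⊗ Y` reflects split monomorphisms. -/
def tensorRightUnit (i : 𝟙_ C ⟶ Y ⊗ Y') : 𝟭 C ⟶ tensorRight Y ⋙ tensorRight Y' :=
  (rightUnitorNatIso C).inv ≫ (tensoringRight C).map i ≫ (tensorRightTensor Y Y').hom

instance isSplitMono_tensorRightUnit_app (i : 𝟙_ C ⟶ Y ⊗ Y') [IsSplitMono i] (X : C) :
    IsSplitMono ((tensorRightUnit i).app X) := by
  have : IsSplitMono (X ◁ i) := inferInstanceAs (IsSplitMono ((tensorLeft X).map i))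
  exact inferInstanceAs (IsSplitMono ((ρ_ X).inv ≫ X ◁ i ≫ (α_ X Y Y').inv))

end Monoidal

/-- **Serre theorem, part 1.** Let `(C, ⊗, I)` be a monoidal category and `X`, `Y` objects
such that `X ⊗ Y` is semisimple.  If `Y` has a strong right dual (an object `Y'` together
with a split mono `I ⟶ Y ⊗ Y'`) and the functor `- ⊗ Y` preserves monomorphisms, then `X`
is semisimple. -/
theorem serre_left_of_strong_right_dual {C : Type*} [Category C] [MonoidalCategory C]
    (X Y : C) (hss : IsSemisimpleObj (X ⊗ Y))
    (hdual : ∃ (Y' : C) (i : 𝟙_ C ⟶ Y ⊗ Y'), IsSplitMono i)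
    (hmono : ∀ ⦃A B : C⦄ (f : A ⟶ B), Mono f → Mono (f ▷ Y)) :
    IsSemisimpleObj X := by
  obtain ⟨Y', i, hi⟩ := hdual
  have : (tensorRight Y).PreservesMonomorphisms := ⟨fun f hf ↦ hmono f hf⟩
  exact .of_obj (tensorRightUnit i) hss
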